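/- arXiv:1304.4000 — 2 statements merged into one kernel-verified Lean document; each statement's English description precedes it below -/
import Mathlib

section
/- Let p > 2, w(s) = (cosh s)^{-2/(p-2)}, and χ(s) = -((p-2)/(4(p-1))) (2 w(s) - w(s)^{p-1}). Then ∫_ℝ χ(s) w(s) ds = -( p(p-2)/(2(p-1)(p+2)) ) ∫_ℝ w(s)² ds. -/
open MeasureTheory

/-!
The function `χ w` is a linear combination of `w ^ 2` and `w ^ p`, and both are powers of `cosh`:
`w ^ 2 = cosh ^ c` and `w ^ p = cosh ^ (c - 2)` with `c = -4 / (p - 2)`. Integrating the derivative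
of `sinh * cosh ^ (c - 1)`, which vanishes at `±∞`, relates the two integrals:
`∫ cosh ^ (c - 2) = c / (c - 1) * ∫ cosh ^ c`.
-/

section CoshPowers

open Real Filter Asymptotics

variable {c : ℝ}

lemma exp_div_two_le_cosh (s : ℝ) : exp s / 2 ≤ cosh s := by
  rw [cosh_eq]
  linarith [exp_pos (-s)]

lemma abs_sinh_le_cosh (s : ℝ) : |sinh s| ≤ cosh s := by
  rw [abs_sinh, ← cosh_abs s]
  exact (sinh_lt_cosh _).le

lemma continuous_cosh_rpow (c : ℝ) : Continuous fun s ↦ cosh s ^ c :=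
  continuous_cosh.rpow_const fun s ↦ .inl (cosh_pos s).ne'

lemma cosh_rpow_isBigO_exp (hc : c ≤ 0) (l : Filter ℝ) :
    (fun s ↦ cosh s ^ c) =O[l] fun s ↦ exp (c * s) := by
  refine .of_bound (2⁻¹ ^ c) (.of_forall fun s ↦ ?_)
  rw [norm_of_nonneg (rpow_nonneg (cosh_pos s).le c), norm_of_nonneg (exp_pos _).le]
  calc cosh s ^ c ≤ (2⁻¹ * exp s) ^ c :=
        rpow_le_rpow_of_nonpos (by positivity) (by linarith [exp_div_two_le_cosh s]) hc
    _ = 2⁻¹ ^ c * exp (c * s) := by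
        rw [mul_rpow (by norm_num) (exp_pos s).le, ← exp_mul, mul_comm s]

lemma integrable_cosh_rpow (hc : c < 0) : Integrable fun s ↦ cosh s ^ c :=
  (continuous_cosh_rpow c).locallyIntegrable.integrable_of_isBigO_atTop_of_norm_isNegInvariant
    (.of_forall fun s ↦ by simp only [Function.comp_apply, cosh_neg])
    (cosh_rpow_isBigO_exp hc.le atTop)
    ⟨Set.Ioi 0, Ioi_mem_atTop 0, integrableOn_exp_mul_Ioi hc 0⟩

lemma integrable_sinh_mul_cosh_rpow_sub_one (hc : c < 0) :
    Integrable fun s ↦ sinh s * cosh s ^ (c - 1) := by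
  refine (integrable_cosh_rpow hc).mono'
    (continuous_sinh.mul (continuous_cosh_rpow _)).aestronglyMeasurable (.of_forall fun s ↦ ?_)
  have hcosh := cosh_pos s
  calc ‖sinh s * cosh s ^ (c - 1)‖ = |sinh s| * cosh s ^ (c - 1) := by
        rw [norm_mul, norm_eq_abs, norm_of_nonneg (rpow_nonneg hcosh.le _)]
    _ ≤ cosh s * cosh s ^ (c - 1) := by gcongr; exact abs_sinh_le_cosh s
    _ = cosh s ^ c := by rw [rpow_sub_one hcosh.ne', mul_div_cancel₀ _ hcosh.ne']

lemma hasDerivAt_sinh_mul_cosh_rpow_sub_one (c s : ℝ) :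
    HasDerivAt (fun s ↦ sinh s * cosh s ^ (c - 1))
      (c * cosh s ^ c - (c - 1) * cosh s ^ (c - 2)) s := by
  have hcosh := (cosh_pos s).ne'
  refine ((hasDerivAt_sinh s).mul
    ((hasDerivAt_cosh s).rpow_const (p := c - 1) (.inl hcosh))).congr_deriv ?_
  have hpow_one : cosh s ^ (c - 1) = cosh s ^ (c - 2) * cosh s := by
    rw [← rpow_add_one hcosh]; ring_nf
  have hpow_two : cosh s ^ c = cosh s ^ (c - 2) * cosh s ^ 2 := by
    rw [← rpow_add_natCast hcosh]; norm_num
  rw [show c - 1 - 1 = c - 2 by ring, hpow_one, hpow_two]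
  linear_combination (1 - c) * cosh s ^ (c - 2) * cosh_sq s

lemma integral_cosh_rpow_sub_two (hc : c < 0) :
    ∫ s, cosh s ^ (c - 2) = c / (c - 1) * ∫ s, cosh s ^ c := by
  have hint := (integrable_cosh_rpow hc).const_mul c
  have hint_sub_two := (integrable_cosh_rpow (c := c - 2) (by linarith)).const_mul (c - 1)
  have hzero := integral_eq_zero_of_hasDerivAt_of_integrable
    (hasDerivAt_sinh_mul_cosh_rpow_sub_one c) (hint.sub hint_sub_two)
    (integrable_sinh_mul_cosh_rpow_sub_one hc)
  rw [integral_sub hint hint_sub_two, integral_const_mul, integral_const_mul] at hzero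
  have hc_sub_one : c - 1 ≠ 0 := by linarith
  field_simp
  linarith

end CoshPowers

section SolitonProfile

open Real

variable {p : ℝ}

/-- The soliton `w`: with `a = 2 / (p - 2)` it solves
`-w'' + a ^ 2 * w = a * (a + 1) * w ^ (p - 1)` on the line. For `p = 2`, where the exponent is
undefined, division by zero makes it the constant `1`. -/
noncomputable def solitonProfile (p s : ℝ) : ℝ := cosh s ^ (-(2 / (p - 2)))

lemma solitonProfile_pos (p s : ℝ) : 0 < solitonProfile p s :=
  rpow_pos_of_pos (cosh_pos s) _

lemma solitonProfile_rpow (p s q : ℝ) :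
    solitonProfile p s ^ q = cosh s ^ (-(2 * q / (p - 2))) := by
  rw [solitonProfile, ← rpow_mul (cosh_pos s).le]
  ring_nf

lemma integrable_solitonProfile_rpow (hp : 2 < p) {q : ℝ} (hq : 0 < q) :
    Integrable fun s ↦ solitonProfile p s ^ q := by
  simp_rw [solitonProfile_rpow]
  exact integrable_cosh_rpow (neg_lt_zero.mpr (div_pos (by positivity) (sub_pos.mpr hp)))

lemma integral_solitonProfile_rpow_self (hp : 2 < p) :
    ∫ s, solitonProfile p s ^ p = 4 / (p + 2) * ∫ s, solitonProfile p s ^ 2 := by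
  have hp_sub_two : 0 < p - 2 := by linarith
  have hexponent : -(2 * p / (p - 2)) = -(2 * 2 / (p - 2)) - 2 := by field_simp; ring
  have hratio : -(2 * 2 / (p - 2)) / (-(2 * 2 / (p - 2)) - 1) = 4 / (p + 2) := by
    have hdenom : -(2 * 2 / (p - 2)) - 1 = -((p + 2) / (p - 2)) := by field_simp; ring
    rw [hdenom, neg_div_neg_eq, div_div_div_cancel_right₀ hp_sub_two.ne']
    norm_num
  simp_rw [← rpow_two, solitonProfile_rpow]
  rw [hexponent, integral_cosh_rpow_sub_two (neg_lt_zero.mpr (by positivity)), hratio]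

end SolitonProfile

/-- For `p > 2`, `w(s) = (cosh s)^{-2/(p-2)}` and
`χ(s) = -((p-2)/(4(p-1)))(2w - w^{p-1})`, one has
`∫ χ w = -(p(p-2)/(2(p-1)(p+2))) ∫ w²`. -/
theorem statement11 (p : ℝ) (hp : 2 < p)
    (w : ℝ → ℝ) (hw : ∀ s, w s = Real.cosh s ^ (-(2 / (p - 2))))
    (χ : ℝ → ℝ) (hχ : ∀ s, χ s = -((p - 2) / (4 * (p - 1))) * (2 * w s - w s ^ (p - 1))) :
    (∫ s : ℝ, χ s * w s) =
      -(p * (p - 2) / (2 * (p - 1) * (p + 2))) * ∫ s : ℝ, w s ^ 2 := by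
  obtain rfl : w = solitonProfile p := funext hw
  have hχw (s : ℝ) : χ s * solitonProfile p s = -((p - 2) / (4 * (p - 1))) *
      (2 * solitonProfile p s ^ 2 - solitonProfile p s ^ p) := by
    have hw_ne := (solitonProfile_pos p s).ne'
    rw [hχ, Real.rpow_sub_one hw_ne]
    field_simp
  have hint_sq : Integrable fun s ↦ solitonProfile p s ^ 2 := by
    simpa only [Real.rpow_two] using integrable_solitonProfile_rpow hp two_pos
  have hint_rpow : Integrable fun s ↦ solitonProfile p s ^ p :=
    integrable_solitonProfile_rpow hp (by linarith)
  simp_rw [hχw]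
  rw [integral_const_mul, integral_sub (hint_sq.const_mul 2) hint_rpow, integral_const_mul,
    integral_solitonProfile_rpow_self hp]
  have hp_sub_one : p - 1 ≠ 0 := by linarith
  have hp_add_two : p + 2 ≠ 0 := by linarith
  field_simp
  ring
end

section
/- Let p > 2, w(s) = (cosh s)^{-2/(p-2)}, and χ(s) = -((p-2)/(4(p-1))) (2 w(s) - w(s)^{p-1}). Then ∫_ℝ χ(s) w(s)^{2p-3} ds = -( (p-2) p (3p-4)/((p-1)(3p-2)(5p-6)) ) ∫_ℝ w(s)^p ds. -/
open MeasureTheory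

/-!
Powers of `w` are powers of `cosh`: writing `r = a (p - 2) / 2`, one has `w ^ r = cosh ^ (-a)`, and
raising `r` by `p - 2` raises `a` by `2`. Integrating the derivative of `sinh * cosh ^ (-(a + 1))`
over the line relates `∫ cosh ^ (-(a + 2))` to `∫ cosh ^ (-a)`, hence `∫ w ^ (r + (p - 2))` to
`∫ w ^ r`. The integrand `χ w ^ (2p - 3)` is a combination of `w ^ (2p - 2)` and `w ^ (3p - 4)`,
which lie one and two steps above `w ^ p`.
-/

section Cosh

variable {a : ℝ}

lemma exp_le_two_mul_cosh (s : ℝ) : Real.exp s ≤ 2 * Real.cosh s := by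
  rw [Real.cosh_eq]
  linarith [Real.exp_pos (-s)]

lemma abs_sinh_le_cosh_s13 (s : ℝ) : |Real.sinh s| ≤ Real.cosh s := by
  rw [Real.abs_sinh, ← Real.cosh_abs]
  exact (Real.sinh_lt_cosh |s|).le

lemma cosh_rpow_neg_le (ha : 0 ≤ a) (s : ℝ) :
    Real.cosh s ^ (-a) ≤ 2 ^ a * Real.exp (-a * s) := by
  have half_exp_le : Real.exp s / 2 ≤ Real.cosh s := by linarith [exp_le_two_mul_cosh s]
  calc Real.cosh s ^ (-a) ≤ (Real.exp s / 2) ^ (-a) :=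
        Real.rpow_le_rpow_of_nonpos (by positivity) half_exp_le (neg_nonpos.2 ha)
    _ = 2 ^ a * Real.exp (-a * s) := by
        rw [Real.div_rpow (Real.exp_pos s).le zero_le_two, ← Real.exp_mul,
          Real.rpow_neg zero_le_two, div_inv_eq_mul, mul_comm, mul_comm s]

lemma continuous_cosh_rpow_s13 (b : ℝ) : Continuous fun s : ℝ => Real.cosh s ^ b :=
  Real.continuous_cosh.rpow_const fun s => Or.inl (Real.cosh_pos s).ne'

lemma integrable_cosh_rpow_neg (ha : 0 < a) : Integrable fun s : ℝ => Real.cosh s ^ (-a) := by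
  have isBigO_exp : (fun s : ℝ => Real.cosh s ^ (-a)) =O[Filter.atTop]
      fun s => Real.exp (-a * s) := by
    refine .of_bound (2 ^ a) (.of_forall fun s => ?_)
    rw [Real.norm_of_nonneg (Real.rpow_nonneg (Real.cosh_pos s).le _),
      Real.norm_of_nonneg (Real.exp_pos _).le]
    exact cosh_rpow_neg_le ha.le s
  refine (continuous_cosh_rpow_s13 (-a)).locallyIntegrable
    |>.integrable_of_isBigO_atTop_of_norm_isNegInvariant (.of_forall fun s => ?_) isBigO_exp
      ⟨Set.Ioi 0, Filter.Ioi_mem_atTop 0, integrableOn_exp_mul_Ioi (neg_lt_zero.2 ha) 0⟩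
  simp only [Function.comp_apply, Real.cosh_neg]

lemma hasDerivAt_sinh_mul_cosh_rpow_neg (a s : ℝ) :
    HasDerivAt (fun s => Real.sinh s * Real.cosh s ^ (-(a + 1)))
      ((a + 1) * Real.cosh s ^ (-(a + 2)) - a * Real.cosh s ^ (-a)) s := by
  have cosh_ne_zero := (Real.cosh_pos s).ne'
  have rpow_step_one : Real.cosh s ^ (-(a + 1)) = Real.cosh s ^ (-(a + 2)) * Real.cosh s := by
    rw [← Real.rpow_add_one cosh_ne_zero]
    ring_nf
  have rpow_step_two : Real.cosh s ^ (-a) = Real.cosh s ^ (-(a + 2)) * Real.cosh s ^ 2 := by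
    rw [← Real.rpow_add_natCast cosh_ne_zero]
    push_cast
    ring_nf
  refine ((Real.hasDerivAt_sinh s).mul ((Real.hasDerivAt_cosh s).rpow_const
    (p := -(a + 1)) (Or.inl cosh_ne_zero))).congr_deriv ?_
  rw [show -(a + 1) - 1 = -(a + 2) by ring, rpow_step_one, rpow_step_two]
  linear_combination (a + 1) * Real.cosh s ^ (-(a + 2)) * Real.cosh_sq s

lemma integrable_sinh_mul_cosh_rpow_neg (ha : 0 < a) :
    Integrable fun s : ℝ => Real.sinh s * Real.cosh s ^ (-(a + 1)) := by
  refine (integrable_cosh_rpow_neg ha).mono'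
    (Real.continuous_sinh.mul (continuous_cosh_rpow_s13 _)).aestronglyMeasurable
    (ae_of_all _ fun s => ?_)
  have rpow_nonneg := Real.rpow_nonneg (Real.cosh_pos s).le (-(a + 1))
  calc ‖Real.sinh s * Real.cosh s ^ (-(a + 1))‖
      = |Real.sinh s| * Real.cosh s ^ (-(a + 1)) := by
        rw [norm_mul, Real.norm_eq_abs, Real.norm_of_nonneg rpow_nonneg]
    _ ≤ Real.cosh s * Real.cosh s ^ (-(a + 1)) := by
        gcongr
        exact abs_sinh_le_cosh_s13 s
    _ = Real.cosh s ^ (-a) := by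
        rw [mul_comm, ← Real.rpow_add_one (Real.cosh_pos s).ne']
        ring_nf

lemma integral_cosh_rpow_neg_add_two (ha : 0 < a) :
    ∫ s : ℝ, Real.cosh s ^ (-(a + 2)) = a / (a + 1) * ∫ s : ℝ, Real.cosh s ^ (-a) := by
  have int_a := (integrable_cosh_rpow_neg ha).const_mul a
  have int_add_two := (integrable_cosh_rpow_neg (a := a + 2) (by positivity)).const_mul (a + 1)
  have integral_deriv := integral_eq_zero_of_hasDerivAt_of_integrable
    (hasDerivAt_sinh_mul_cosh_rpow_neg a) (int_add_two.sub int_a)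
    (integrable_sinh_mul_cosh_rpow_neg ha)
  rw [integral_sub int_add_two int_a, integral_const_mul, integral_const_mul] at integral_deriv
  field_simp
  linarith

end Cosh

lemma add_div_self_pos {r d : ℝ} (h : 0 < r / d) : 0 < (r + d) / d := by
  rw [add_div, div_self (div_ne_zero_iff.1 h.ne').2]
  positivity

lemma two_mul_sub_rpow_mul_rpow {x : ℝ} (hx : 0 < x) (q r : ℝ) :
    (2 * x - x ^ q) * x ^ r = 2 * x ^ (r + 1) - x ^ (q + r) := by
  rw [Real.rpow_add_one hx.ne', Real.rpow_add hx]
  ring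

/-- The soliton profile of the nonlinear Schrödinger equation with nonlinearity of degree `p - 1`:
it solves `((p - 2) / 2) ^ 2 * w'' = w - (p / 2) * w ^ (p - 1)` for `p ≠ 2`.
At `p = 2`, division by zero makes it the constant `1`. -/
noncomputable def soliton (p s : ℝ) : ℝ := Real.cosh s ^ (-(2 / (p - 2)))

section Soliton

variable {p r : ℝ}

lemma soliton_pos (p s : ℝ) : 0 < soliton p s := Real.rpow_pos_of_pos (Real.cosh_pos s) _

lemma soliton_rpow (p r s : ℝ) : soliton p s ^ r = Real.cosh s ^ (-(2 * (r / (p - 2)))) := by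
  rw [soliton, ← Real.rpow_mul (Real.cosh_pos s).le]
  ring_nf

lemma integrable_soliton_rpow (hr : 0 < r / (p - 2)) : Integrable fun s => soliton p s ^ r := by
  simp only [soliton_rpow]
  exact integrable_cosh_rpow_neg (by positivity)

lemma integral_soliton_rpow_add (hr : 0 < r / (p - 2)) :
    ∫ s, soliton p s ^ (r + (p - 2)) = 2 * r / (2 * r + (p - 2)) * ∫ s, soliton p s ^ r := by
  have p_sub_two_ne_zero : p - 2 ≠ 0 := (div_ne_zero_iff.1 hr.ne').2
  have exponent_add : 2 * ((r + (p - 2)) / (p - 2)) = 2 * (r / (p - 2)) + 2 := by field_simp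
  have ratio : 2 * (r / (p - 2)) / (2 * (r / (p - 2)) + 1) = 2 * r / (2 * r + (p - 2)) := by
    field_simp
  simp only [soliton_rpow, exponent_add]
  rw [integral_cosh_rpow_neg_add_two (by positivity), ratio]

lemma two_mul_sub_two_div_sub_two_pos (hp : 0 < p / (p - 2)) : 0 < (2 * p - 2) / (p - 2) := by
  rw [show 2 * p - 2 = p + (p - 2) by ring]
  exact add_div_self_pos hp

lemma three_mul_sub_four_div_sub_two_pos (hp : 0 < p / (p - 2)) :
    0 < (3 * p - 4) / (p - 2) := by
  rw [show 3 * p - 4 = 2 * p - 2 + (p - 2) by ring]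
  exact add_div_self_pos (two_mul_sub_two_div_sub_two_pos hp)

lemma integral_soliton_rpow_two_mul_sub_two (hp : 0 < p / (p - 2)) :
    ∫ s, soliton p s ^ (2 * p - 2) = 2 * p / (3 * p - 2) * ∫ s, soliton p s ^ p := by
  convert integral_soliton_rpow_add hp using 3 <;> ring_nf

lemma integral_soliton_rpow_three_mul_sub_four (hp : 0 < p / (p - 2)) :
    ∫ s, soliton p s ^ (3 * p - 4) =
      4 * (p - 1) / (5 * p - 6) * ∫ s, soliton p s ^ (2 * p - 2) := by
  convert integral_soliton_rpow_add (two_mul_sub_two_div_sub_two_pos hp) using 3 <;> ring_nf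

lemma integral_two_mul_soliton_sub_rpow_mul_rpow (hp : 0 < p / (p - 2)) :
    ∫ s, (2 * soliton p s - soliton p s ^ (p - 1)) * soliton p s ^ (2 * p - 3) =
      4 * p * (3 * p - 4) / ((3 * p - 2) * (5 * p - 6)) * ∫ s, soliton p s ^ p := by
  have int_two_mul_sub_two := integrable_soliton_rpow (two_mul_sub_two_div_sub_two_pos hp)
  have int_three_mul_sub_four := integrable_soliton_rpow (three_mul_sub_four_div_sub_two_pos hp)
  have five_mul_sub_six_ne_zero : 5 * p - 6 ≠ 0 := by
    rcases div_pos_iff.1 hp with ⟨_, _⟩ | ⟨_, _⟩ <;> linarith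
  have coefficient : 2 - 4 * (p - 1) / (5 * p - 6) = 2 * (3 * p - 4) / (5 * p - 6) := by
    rw [eq_div_iff five_mul_sub_six_ne_zero, sub_mul, div_mul_cancel₀ _ five_mul_sub_six_ne_zero]
    ring
  calc ∫ s, (2 * soliton p s - soliton p s ^ (p - 1)) * soliton p s ^ (2 * p - 3)
      = 2 * (∫ s, soliton p s ^ (2 * p - 2)) - ∫ s, soliton p s ^ (3 * p - 4) := by
        simp only [two_mul_sub_rpow_mul_rpow (soliton_pos p _)]
        rw [show 2 * p - 3 + 1 = 2 * p - 2 by ring, show p - 1 + (2 * p - 3) = 3 * p - 4 by ring,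
          integral_sub (int_two_mul_sub_two.const_mul 2) int_three_mul_sub_four, integral_const_mul]
    _ = (2 - 4 * (p - 1) / (5 * p - 6)) * ∫ s, soliton p s ^ (2 * p - 2) := by
        rw [integral_soliton_rpow_three_mul_sub_four hp, sub_mul]
    _ = 4 * p * (3 * p - 4) / ((3 * p - 2) * (5 * p - 6)) * ∫ s, soliton p s ^ p := by
        rw [coefficient, integral_soliton_rpow_two_mul_sub_two hp, ← mul_assoc, div_mul_div_comm]
        ring

end Soliton

theorem statement13_general (p : ℝ) (hp : p < 0 ∨ 2 < p)
    (w : ℝ → ℝ) (hw : ∀ s, w s = Real.cosh s ^ (-(2 / (p - 2))))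
    (χ : ℝ → ℝ) (hχ : ∀ s, χ s = -((p - 2) / (4 * (p - 1))) * (2 * w s - w s ^ (p - 1))) :
    (∫ s : ℝ, χ s * w s ^ (2 * p - 3)) =
      -((p - 2) * p * (3 * p - 4) / ((p - 1) * (3 * p - 2) * (5 * p - 6))) *
        ∫ s : ℝ, w s ^ p := by
  obtain rfl : w = soliton p := funext hw
  have ratio_pos : 0 < p / (p - 2) := by
    rcases hp with p_neg | two_lt_p
    · exact div_pos_of_neg_of_neg p_neg (by linarith)
    · exact div_pos (by linarith) (by linarith)
  simp only [hχ, mul_assoc (-((p - 2) / (4 * (p - 1))))]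
  rw [integral_const_mul, integral_two_mul_soliton_sub_rpow_mul_rpow ratio_pos]
  field_simp

/-- For `p > 2`, `w(s) = (cosh s)^{-2/(p-2)}` and
`χ(s) = -((p-2)/(4(p-1)))(2w - w^{p-1})`, one has
`∫ χ w^{2p-3} = -((p-2)p(3p-4)/((p-1)(3p-2)(5p-6))) ∫ w^p`. -/
theorem statement13 (p : ℝ) (hp : 2 < p)
    (w : ℝ → ℝ) (hw : ∀ s, w s = Real.cosh s ^ (-(2 / (p - 2))))
    (χ : ℝ → ℝ) (hχ : ∀ s, χ s = -((p - 2) / (4 * (p - 1))) * (2 * w s - w s ^ (p - 1))) :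
    (∫ s : ℝ, χ s * w s ^ (2 * p - 3)) =
      -((p - 2) * p * (3 * p - 4) / ((p - 1) * (3 * p - 2) * (5 * p - 6))) *
        ∫ s : ℝ, w s ^ p :=
  statement13_general p (Or.inr hp) w hw χ hχ
end
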